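/- Let ℓ̂_1,…,ℓ̂_K be nonnegative reals such that ℓ̂_i · ℓ̂_j = 0 whenever i ≠ j (at most one is nonzero), and let α_1,…,α_K and β be reals with 0 ≤ α_i ≤ β for all i. Then exp(∑_{i=1}^K (α_i/β) · log(1 + β ℓ̂_i)) ≤ ∏_{i=1}^K (1 + α_i ℓ̂_i) = 1 + ∑_{i=1}^K α_i ℓ̂_i. -/

import Mathlib

open Finset Real

theorem prod_one_add_eq_one_add_sum_of_pairwise_mul_eq_zero {ι R : Type*} [CommSemiring R]
    {s : Finset ι} {f : ι → R} (hf : (s : Set ι).Pairwise fun i j => f i * f j = 0) :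
    ∏ i ∈ s, (1 + f i) = 1 + ∑ i ∈ s, f i := by
  induction s using Finset.cons_induction with
  | empty => simp
  | cons a s ha ih =>
    have hf_s : (s : Set ι).Pairwise fun i j => f i * f j = 0 :=
      hf.mono (coe_subset.2 (subset_cons ha))
    have cross_terms : f a * ∑ i ∈ s, f i = 0 := by
      rw [mul_sum]
      exact sum_eq_zero fun i hi =>
        hf (mem_cons_self a s) (mem_cons_of_mem hi) (ne_of_mem_of_not_mem hi ha).symm
    calc ∏ i ∈ s.cons a ha, (1 + f i)
        = (1 + f a) * (1 + ∑ i ∈ s, f i) := by rw [prod_cons, ih hf_s]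
      _ = 1 + (f a + ∑ i ∈ s, f i) + f a * ∑ i ∈ s, f i := by ring
      _ = 1 + ∑ i ∈ s.cons a ha, f i := by rw [cross_terms, add_zero, sum_cons]

theorem exp_mul_log_one_add_le_one_add_mul {p y : ℝ} (hp0 : 0 ≤ p) (hp1 : p ≤ 1) (hy : -1 < y) :
    exp (p * log (1 + y)) ≤ 1 + p * y :=
  calc exp (p * log (1 + y))
      = (1 + y) ^ p := by rw [rpow_def_of_pos (by linarith), mul_comm]
    _ ≤ 1 + p * y := rpow_one_add_le_one_add_mul_self hy.le hp0 hp1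

theorem exp_sum_mul_log_one_add_le_prod_one_add_mul {ι : Type*} {s : Finset ι} {p y : ι → ℝ}
    (hp0 : ∀ i ∈ s, 0 ≤ p i) (hp1 : ∀ i ∈ s, p i ≤ 1) (hy : ∀ i ∈ s, -1 < y i) :
    exp (∑ i ∈ s, p i * log (1 + y i)) ≤ ∏ i ∈ s, (1 + p i * y i) := by
  rw [exp_sum]
  exact prod_le_prod (fun _ _ => exp_nonneg _) fun i hi =>
    exp_mul_log_one_add_le_one_add_mul (hp0 i hi) (hp1 i hi) (hy i hi)

theorem ix_chaining_step_general {ι : Type*} {s : Finset ι} {ℓ α : ι → ℝ} {β : ℝ}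
    (hℓ_gt : ∀ i ∈ s, -1 < β * ℓ i) (hℓ_orth : (s : Set ι).Pairwise fun i j => ℓ i * ℓ j = 0)
    (hα_nonneg : ∀ i ∈ s, 0 ≤ α i) (hα_le : ∀ i ∈ s, α i ≤ β) :
    exp (∑ i ∈ s, α i / β * log (1 + β * ℓ i)) ≤ ∏ i ∈ s, (1 + α i * ℓ i) ∧
      ∏ i ∈ s, (1 + α i * ℓ i) = 1 + ∑ i ∈ s, α i * ℓ i := by
  have hβ_nonneg : ∀ i ∈ s, 0 ≤ β := fun i hi => (hα_nonneg i hi).trans (hα_le i hi)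
  -- If `β = 0`, then `α i / β = 0` by convention, but `α i` vanishes as well.
  have weight_mul_arg : ∀ i ∈ s, α i / β * (β * ℓ i) = α i * ℓ i := fun i hi => by
    rw [← mul_assoc,
      div_mul_cancel_of_imp fun hβ => le_antisymm (hβ ▸ hα_le i hi) (hα_nonneg i hi)]
  constructor
  · calc exp (∑ i ∈ s, α i / β * log (1 + β * ℓ i))
        ≤ ∏ i ∈ s, (1 + α i / β * (β * ℓ i)) :=
          exp_sum_mul_log_one_add_le_prod_one_add_mul
            (fun i hi => div_nonneg (hα_nonneg i hi) (hβ_nonneg i hi))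
            (fun i hi => div_le_one_of_le₀ (hα_le i hi) (hβ_nonneg i hi)) hℓ_gt
      _ = ∏ i ∈ s, (1 + α i * ℓ i) := prod_congr rfl fun i hi => by rw [weight_mul_arg i hi]
  · have hαℓ_orth : (s : Set ι).Pairwise fun i j => α i * ℓ i * (α j * ℓ j) = 0 :=
      hℓ_orth.imp fun i j hij => by rw [mul_mul_mul_comm, hij, mul_zero]
    exact prod_one_add_eq_one_add_sum_of_pairwise_mul_eq_zero hαℓ_orth

/-- **Chaining step of the IX concentration lemma.**  Let `ℓ̂ i ≥ 0` with
`ℓ̂ i · ℓ̂ j = 0` for `i ≠ j` (at most one is nonzero), and let `0 ≤ α i ≤ β`.  Then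
`exp(∑_i (α i / β) log(1 + β ℓ̂ i)) ≤ ∏_i (1 + α i ℓ̂ i) = 1 + ∑_i α i ℓ̂ i`. -/
theorem ix_chaining_step
    (K : ℕ) (hatℓ : Fin K → ℝ) (hℓ_nonneg : ∀ i, 0 ≤ hatℓ i)
    (hℓ_orth : ∀ i j, i ≠ j → hatℓ i * hatℓ j = 0)
    (α : Fin K → ℝ) (β : ℝ)
    (hα_nonneg : ∀ i, 0 ≤ α i) (hα_le : ∀ i, α i ≤ β) :
    Real.exp (∑ i, (α i / β) * Real.log (1 + β * hatℓ i)) ≤ ∏ i, (1 + α i * hatℓ i) ∧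
    ∏ i, (1 + α i * hatℓ i) = 1 + ∑ i, α i * hatℓ i := by
  exact ix_chaining_step_general
    (fun i _ => neg_one_lt_zero.trans_le
      (mul_nonneg ((hα_nonneg i).trans (hα_le i)) (hℓ_nonneg i)))
    (fun i _ j _ => hℓ_orth i j) (fun i _ => hα_nonneg i) (fun i _ => hα_le i)
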